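/- Let H be a Hilbert space, 1 ≤ r < ∞, and T an operator in the Schatten class S^r(H). Then T can be decomposed as T = Σ_{k≥0} α_k u_k (convergence in operator norm), where each u_k is an operator of rank at most 2^k and operator norm at most 1, and the coefficients satisfy Σ_{k≥0} 2^k |α_k|^r ≤ 2 ‖T‖_{S^r}^r. -/

import Mathlib

/-- The `n`-th approximation number of a bounded operator `T` on a Hilbert space:
the distance from `T` to the operators of rank at most `n`.  For a compact operator
it coincides with the `(n+1)`-st singular value, so that
`‖T‖_{S^r}^r = ∑_{n≥0} (approxNumber T n)^r`. -/
noncomputable def approxNumber {H : Type*} [NormedAddCommGroup H] [InnerProductSpace ℂ H]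
    (T : H →L[ℂ] H) (n : ℕ) : ℝ :=
  sInf {c : ℝ | ∃ u : H →L[ℂ] H,
    Module.rank ℂ (LinearMap.range (u : H →ₗ[ℂ] H)) ≤ (n : Cardinal) ∧ c = ‖T - u‖}

open ContinuousLinearMap InnerProductSpace in
theorem aux_eig {H : Type*} [NormedAddCommGroup H] [InnerProductSpace ℂ H] [CompleteSpace H]
    (S : H →L[ℂ] H) (hS : IsCompactOperator S) (h0 : S ≠ 0) :
    ∃ x : H, x ≠ 0 ∧ adjoint S (S x) = ((‖S‖ ^ 2 : ℝ) : ℂ) • x := by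
  have hnt : Nontrivial H := by
    by_contra h
    rw [not_nontrivial_iff_subsingleton] at h
    exact h0 (ContinuousLinearMap.ext fun x => Subsingleton.elim _ _)
  have hA : IsCompactOperator (adjoint S ∘L S) := hS.clm_comp (adjoint S)
  have hpos : (0 : H →L[ℂ] H) ≤ adjoint S ∘L S :=
    (ContinuousLinearMap.nonneg_iff_isPositive _).2 (ContinuousLinearMap.isPositive_adjoint_comp_self S)
  have hn : ‖adjoint S ∘L S‖ = ‖S‖ ^ 2 := by
    rw [norm_adjoint_comp_self, sq]
  have hmem := CStarAlgebra.norm_mem_spectrum_of_nonneg hpos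
  have hmem2 : ((‖S‖ ^ 2 : ℝ) : ℂ) ∈ spectrum ℂ (adjoint S ∘L S) := by
    rw [← hn]
    exact spectrum.algebraMap_mem ℂ hmem
  have hne : ((‖S‖ ^ 2 : ℝ) : ℂ) ≠ 0 := by
    have := norm_pos_iff.2 h0
    exact_mod_cast (by positivity : (‖S‖ ^ 2 : ℝ) ≠ 0)
  obtain ⟨x, hx⟩ := ((IsCompactOperator.hasEigenvalue_iff_mem_spectrum hA hne).2 hmem2).exists_hasEigenvector
  exact ⟨x, hx.2, hx.apply_eq_smul⟩

/-- The greedy invariant. -/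
def GoodSub {H : Type*} [NormedAddCommGroup H] [InnerProductSpace ℂ H] [CompleteSpace H]
    (T : H →L[ℂ] H) (n : ℕ) (V : Submodule ℂ H) : Prop :=
  ∃ _ : FiniteDimensional ℂ V,
    Module.finrank ℂ V ≤ n ∧
    (Module.finrank ℂ V = n ∨ T ∘L Vᗮ.starProjection = 0) ∧
    (∀ v ∈ V, ContinuousLinearMap.adjoint T (T v) ∈ V) ∧
    (∀ v ∈ V, ‖T ∘L Vᗮ.starProjection‖ * ‖v‖ ≤ ‖T v‖)

theorem aux_mono {H : Type*} [NormedAddCommGroup H] [InnerProductSpace ℂ H] [CompleteSpace H]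
    (T : H →L[ℂ] H) (V W : Submodule ℂ H) (h : V ≤ W) :
    ‖T ∘L Wᗮ.starProjection‖ ≤ ‖T ∘L Vᗮ.starProjection‖ := by
  have h1 : T ∘L Wᗮ.starProjection = (T ∘L Vᗮ.starProjection) ∘L Wᗮ.starProjection := by
    ext x
    simp only [ContinuousLinearMap.comp_apply]
    rw [Submodule.starProjection_eq_self_iff.2
      (Submodule.orthogonal_le h (Submodule.starProjection_apply_mem Wᗮ x))]
  rw [h1]
  refine (ContinuousLinearMap.opNorm_comp_le _ _).trans ?_
  exact mul_le_of_le_one_right (norm_nonneg _) (Submodule.starProjection_norm_le _)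

open ContinuousLinearMap InnerProductSpace in
theorem aux_step {H : Type*} [NormedAddCommGroup H] [InnerProductSpace ℂ H] [CompleteSpace H]
    (T : H →L[ℂ] H) (hT : IsCompactOperator T) (n : ℕ) (V : Submodule ℂ H)
    (hV : GoodSub T n V) : ∃ W, V ≤ W ∧ GoodSub T (n + 1) W ∧
      (T ∘L Vᗮ.starProjection ≠ 0 → Module.finrank ℂ W = n + 1 ∧
        ∀ v ∈ W, ‖T ∘L Vᗮ.starProjection‖ * ‖v‖ ≤ ‖T v‖) := by
  obtain ⟨hfd, hle, hor, hinv, hbd⟩ := hV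
  by_cases h0 : T ∘L Vᗮ.starProjection = 0
  · exact ⟨V, le_rfl, ⟨hfd, by omega, Or.inr h0, hinv, hbd⟩, fun h => absurd h0 h⟩
  have hfr : Module.finrank ℂ V = n := hor.resolve_right h0
  obtain ⟨x, hx0, hx⟩ := aux_eig (T ∘L Vᗮ.starProjection) (hT.comp_clm _) h0
  set s := ‖T ∘L Vᗮ.starProjection‖ with hs
  have hspos : 0 < s := norm_pos_iff.2 h0
  have hne : ((s ^ 2 : ℝ) : ℂ) ≠ 0 := by
    exact_mod_cast (by positivity : (s ^ 2 : ℝ) ≠ 0)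
  have hsa : adjoint (Vᗮ.starProjection) = Vᗮ.starProjection := by
    exact (isSelfAdjoint_starProjection Vᗮ).adjoint_eq
  rw [adjoint_comp, hsa] at hx
  simp only [comp_apply] at hx
  have hxV : x ∈ Vᗮ := by
    have : ((s ^ 2 : ℝ) : ℂ) • x ∈ Vᗮ := hx ▸ Submodule.starProjection_apply_mem _ _
    exact (Submodule.smul_mem_iff _ hne).1 this
  rw [Submodule.starProjection_eq_self_iff.2 hxV] at hx
  have hAx : adjoint T (T x) ∈ Vᗮ := by
    rw [Submodule.mem_orthogonal]
    intro v hv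
    rw [adjoint_inner_right, ← adjoint_inner_left]
    exact (Submodule.mem_orthogonal _ _).1 hxV _ (hinv v hv)
  rw [Submodule.starProjection_eq_self_iff.2 hAx] at hx
  have hTx : ‖T x‖ ^ 2 = s ^ 2 * ‖x‖ ^ 2 := by
    have h1 : inner ℂ (T x) (T x) = ((s ^ 2 : ℝ) : ℂ) * inner ℂ x x := by
      rw [← adjoint_inner_right, hx, inner_smul_right]
    have h2 := congrArg Complex.re h1
    rw [Complex.re_ofReal_mul] at h2
    rw [← inner_self_eq_norm_sq (𝕜 := ℂ) (T x), ← inner_self_eq_norm_sq (𝕜 := ℂ) x]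
    exact h2
  have hxnV : x ∉ V := fun h => hx0 (Submodule.disjoint_def.1 V.orthogonal_disjoint x h hxV)
  refine ⟨V ⊔ Submodule.span ℂ {x}, le_sup_left, ?_⟩
  have hdim : Module.finrank ℂ (V ⊔ Submodule.span ℂ {x} : Submodule ℂ H) = n + 1 := by
    have hd : V ⊓ Submodule.span ℂ {x} = ⊥ := by
      rw [← disjoint_iff]
      exact (Submodule.disjoint_span_singleton' hx0).2 hxnV
    have := Submodule.finrank_sup_add_finrank_inf_eq V (Submodule.span ℂ {x})
    rw [hd, finrank_bot, finrank_span_singleton hx0, hfr] at this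
    omega
  have key : ∀ y ∈ V ⊔ Submodule.span ℂ {x}, s * ‖y‖ ≤ ‖T y‖ := by
    intro y hy
    obtain ⟨v, hv, z, hz, rfl⟩ := Submodule.mem_sup.1 hy
    obtain ⟨c, rfl⟩ := Submodule.mem_span_singleton.1 hz
    have hvx : inner ℂ v x = 0 := (Submodule.mem_orthogonal _ _).1 hxV v hv
    have o1 : inner ℂ v (c • x) = 0 := by rw [inner_smul_right, hvx, mul_zero]
    have o2 : inner ℂ (T v) (T (c • x)) = 0 := by
      rw [← adjoint_inner_right, map_smul, map_smul, hx, inner_smul_right, inner_smul_right, hvx]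
      simp
    have e1 := norm_add_sq_eq_norm_sq_add_norm_sq_of_inner_eq_zero _ _ o1
    have e2 := norm_add_sq_eq_norm_sq_add_norm_sq_of_inner_eq_zero _ _ o2
    refine abs_le_of_sq_le_sq' ?_ (norm_nonneg _) |>.2
    rw [map_add]
    have hb := hbd v hv
    have hb2 : (s * ‖v‖) ^ 2 ≤ ‖T v‖ ^ 2 := pow_le_pow_left₀ (by positivity) hb 2
    have hc : ‖T (c • x)‖ ^ 2 = s ^ 2 * ‖c • x‖ ^ 2 := by
      rw [map_smul, norm_smul, norm_smul, mul_pow, mul_pow, hTx]; ring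
    nlinarith
  have hm := aux_mono T V (V ⊔ Submodule.span ℂ {x}) le_sup_left
  refine ⟨⟨inferInstance, hdim.le, Or.inl hdim, ?_, fun y hy =>
    (mul_le_mul_of_nonneg_right hm (norm_nonneg _)).trans (key y hy)⟩, fun _ => ⟨hdim, key⟩⟩
  intro y hy
  obtain ⟨v, hv, z, hz, rfl⟩ := Submodule.mem_sup.1 hy
  obtain ⟨c, rfl⟩ := Submodule.mem_span_singleton.1 hz
  rw [map_add, map_add, map_smul, map_smul, hx]
  exact Submodule.add_mem_sup (hinv v hv) (Submodule.smul_mem _ _ (Submodule.smul_mem _ _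
    (Submodule.mem_span_singleton_self x)))

theorem aux_seq {H : Type*} [NormedAddCommGroup H] [InnerProductSpace ℂ H] [CompleteSpace H]
    (T : H →L[ℂ] H) (hT : IsCompactOperator T) :
    ∃ V : ℕ → Submodule ℂ H, Monotone V ∧ ∀ n, GoodSub T n (V n) := by
  have h0 : GoodSub T 0 (⊥ : Submodule ℂ H) :=
    ⟨inferInstance, by simp, by simp, by simp, by simp⟩
  choose! f hf1 hf2 hf3 using aux_step T hT
  let V : ℕ → Submodule ℂ H := fun n => Nat.rec ⊥ (fun n W => f n W) n
  have hV : ∀ n, GoodSub T n (V n) := by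
    intro n
    induction n with
    | zero => exact h0
    | succ k ih => exact hf2 k _ ih
  exact ⟨V, monotone_nat_of_le_succ fun n => hf1 n _ (hV n), hV⟩

theorem aux_nonempty {H : Type*} [NormedAddCommGroup H] [InnerProductSpace ℂ H]
    (T : H →L[ℂ] H) (n : ℕ) : {c : ℝ | ∃ u : H →L[ℂ] H,
    Module.rank ℂ (LinearMap.range (u : H →ₗ[ℂ] H)) ≤ (n : Cardinal) ∧ c = ‖T - u‖}.Nonempty :=
  ⟨‖T - 0‖, 0, by simp, rfl⟩

theorem aux_nonneg {H : Type*} [NormedAddCommGroup H] [InnerProductSpace ℂ H]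
    (T : H →L[ℂ] H) (n : ℕ) : 0 ≤ approxNumber T n := by
  apply Real.sInf_nonneg
  rintro c ⟨u, -, rfl⟩
  exact norm_nonneg _

theorem aux_anti {H : Type*} [NormedAddCommGroup H] [InnerProductSpace ℂ H]
    (T : H →L[ℂ] H) : Antitone (approxNumber T) := by
  intro m n hmn
  refine csInf_le_csInf ⟨0, ?_⟩ (aux_nonempty T m) ?_
  · rintro c ⟨u, -, rfl⟩
    exact norm_nonneg _
  · rintro c ⟨u, hu, rfl⟩
    exact ⟨u, hu.trans (by exact_mod_cast hmn), rfl⟩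

theorem aux_good_le {H : Type*} [NormedAddCommGroup H] [InnerProductSpace ℂ H] [CompleteSpace H]
    (T : H →L[ℂ] H) (hT : IsCompactOperator T) (n : ℕ) (V : Submodule ℂ H)
    (hV : GoodSub T n V) : ‖T ∘L Vᗮ.starProjection‖ ≤ approxNumber T n := by
  by_cases h0 : T ∘L Vᗮ.starProjection = 0
  · rw [h0, norm_zero]; exact aux_nonneg T n
  refine le_csInf (aux_nonempty T n) ?_
  rintro c ⟨u, hu, rfl⟩
  obtain ⟨W, -, -, hW⟩ := aux_step T hT n V hV
  obtain ⟨hdim, hW⟩ := hW h0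
  have hfin : FiniteDimensional ℂ (LinearMap.range (u : H →ₗ[ℂ] H)) :=
    Module.rank_lt_aleph0_iff.1 (hu.trans_lt (Cardinal.natCast_lt_aleph0))
  have hWfin : FiniteDimensional ℂ W := Module.finite_of_finrank_pos (by omega)
  have hur : Module.finrank ℂ (LinearMap.range (u : H →ₗ[ℂ] H)) ≤ n :=
    Module.finrank_le_of_rank_le hu
  have hker := LinearMap.ker_ne_bot_of_finrank_lt
    (f := (u : H →ₗ[ℂ] H).rangeRestrict ∘ₗ W.subtype) (by omega)
  obtain ⟨y, hy, hy0⟩ := Submodule.exists_mem_ne_zero_of_ne_bot hker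
  have huy : u (y : H) = 0 := by
    have := congrArg Subtype.val (LinearMap.mem_ker.1 hy)
    simpa using this
  have hpos : 0 < ‖(y : H)‖ := norm_pos_iff.2 (by simpa using hy0)
  have h1 := hW y y.2
  have h2 := (T - u).le_opNorm (y : H)
  rw [sub_apply, huy, sub_zero] at h2
  exact le_of_mul_le_mul_right (h1.trans h2) hpos

theorem aux_compact {H : Type*} [NormedAddCommGroup H] [InnerProductSpace ℂ H] [CompleteSpace H]
    (T : H →L[ℂ] H) (h : Filter.Tendsto (approxNumber T) Filter.atTop (nhds 0)) :
    IsCompactOperator T := by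
  have hc := isClosed_setOfPred_isCompactOperator (σ₁₂ := RingHom.id ℂ) (M₁ := H) (M₂ := H)
  have : T ∈ closure {f : H →L[ℂ] H | IsCompactOperator f} := by
    rw [Metric.mem_closure_iff]
    intro ε hε
    obtain ⟨n, hn⟩ := (h.eventually (gt_mem_nhds hε)).exists
    obtain ⟨c, ⟨u, hu, rfl⟩, hlt⟩ := exists_lt_of_csInf_lt (aux_nonempty T n) hn
    refine ⟨u, ?_, by rwa [dist_eq_norm]⟩
    have hfin : FiniteDimensional ℂ (LinearMap.range (u : H →ₗ[ℂ] H)) :=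
      Module.rank_lt_aleph0_iff.1 (hu.trans_lt (Cardinal.natCast_lt_aleph0))
    have hl : LocallyCompactSpace (LinearMap.range (u : H →ₗ[ℂ] H)) := by
      have : ProperSpace (LinearMap.range (u : H →ₗ[ℂ] H)) := FiniteDimensional.proper ℂ _
      infer_instance
    have := isCompactOperator_of_locallyCompactSpace_dom (u.codRestrict (LinearMap.range (u : H →ₗ[ℂ] H)) (fun x => ⟨x, rfl⟩))
    exact this.clm_comp (LinearMap.range (u : H →ₗ[ℂ] H)).subtypeL
  rwa [hc.closure_eq] at this

/-- Dyadic condensation bound. -/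
theorem aux_dyadic (f : ℕ → ℝ) (hf : Antitone f) (h0 : ∀ n, 0 ≤ f n) (hs : Summable f) (N : ℕ) :
    ∑ k ∈ Finset.range N, (2 : ℝ) ^ k * f (2 ^ k - 1) ≤ 2 * ∑' n, f n := by
  have key : ∀ N : ℕ, ∑ k ∈ Finset.range (N + 1), (2 : ℝ) ^ k * f (2 ^ k - 1)
      ≤ 2 * ∑ n ∈ Finset.range (2 ^ N), f n := by
    intro N
    induction N with
    | zero => simp; linarith [h0 0]
    | succ N ih =>
      rw [Finset.sum_range_succ]
      have e : (2 : ℕ) ^ (N + 1) = 2 ^ N + 2 ^ N := by ring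
      have h1 : ∑ n ∈ Finset.range (2 ^ (N + 1)), f n
          = ∑ n ∈ Finset.range (2 ^ N), f n + ∑ n ∈ Finset.range (2 ^ N), f (2 ^ N + n) := by
        rw [e, Finset.sum_range_add]
      have h2 : ∑ n ∈ Finset.range (2 ^ N), f (2 ^ (N + 1) - 1)
          ≤ ∑ n ∈ Finset.range (2 ^ N), f (2 ^ N + n) := by
        refine Finset.sum_le_sum fun n hn => hf ?_
        rw [Finset.mem_range] at hn
        omega
      rw [Finset.sum_const, Finset.card_range, nsmul_eq_mul] at h2
      push_cast at h2
      rw [h1, pow_succ]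
      linarith
  calc _ ≤ ∑ k ∈ Finset.range (N + 1), (2 : ℝ) ^ k * f (2 ^ k - 1) :=
        Finset.sum_le_sum_of_subset_of_nonneg (by simp)
          fun k _ _ => mul_nonneg (by positivity) (h0 _)
    _ ≤ _ := key N
    _ ≤ _ := by
      have := hs.sum_le_tsum (Finset.range (2 ^ N)) (fun n _ => h0 n)
      linarith

theorem aux_block {H : Type*} [NormedAddCommGroup H] [InnerProductSpace ℂ H] [CompleteSpace H]
    (T : H →L[ℂ] H) (m n : ℕ) (V W : Submodule ℂ H) (hVW : V ≤ W)
    (hV : GoodSub T m V) (hW : GoodSub T (m + n) W) :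
    ‖T ∘L Vᗮ.starProjection - T ∘L Wᗮ.starProjection‖ ≤ ‖T ∘L Vᗮ.starProjection‖ ∧
    Module.rank ℂ (LinearMap.range ((T ∘L Vᗮ.starProjection - T ∘L Wᗮ.starProjection :
      H →L[ℂ] H) : H →ₗ[ℂ] H)) ≤ (n : Cardinal) := by
  obtain ⟨hVf, hV1, hV2, -, -⟩ := hV
  obtain ⟨hWf, hW1, hW2, -, -⟩ := hW
  have hproj : ∀ x, Vᗮ.starProjection x - Wᗮ.starProjection x
      = Vᗮ.starProjection (W.starProjection x) := by
    intro x
    have h1 : Wᗮ.starProjection x = x - W.starProjection x := by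
      rw [Submodule.starProjection_orthogonal']; rfl
    have h2 : Vᗮ.starProjection (Wᗮ.starProjection x) = Wᗮ.starProjection x :=
      Submodule.starProjection_eq_self_iff.2
        (Submodule.orthogonal_le hVW (Submodule.starProjection_apply_mem Wᗮ x))
    have h3 : W.starProjection x = x - Wᗮ.starProjection x := by rw [h1]; abel
    rw [h3, map_sub, h2]
  have hmem : ∀ x, Vᗮ.starProjection x - Wᗮ.starProjection x ∈ Vᗮ ⊓ W := by
    intro x
    rw [hproj]
    refine ⟨Submodule.starProjection_apply_mem _ _, ?_⟩
    rw [Submodule.starProjection_orthogonal']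
    exact W.sub_mem (Submodule.starProjection_apply_mem _ _)
      (hVW (Submodule.starProjection_apply_mem _ _))
  constructor
  · have h1 : T ∘L Vᗮ.starProjection - T ∘L Wᗮ.starProjection
        = (T ∘L Vᗮ.starProjection) ∘L W.starProjection := by
      ext x
      simp only [sub_apply, ContinuousLinearMap.comp_apply]
      rw [← map_sub, hproj]
    rw [h1]
    refine (ContinuousLinearMap.opNorm_comp_le _ _).trans ?_
    exact mul_le_of_le_one_right (norm_nonneg _) (Submodule.starProjection_norm_le _)
  · by_cases h0 : T ∘L Vᗮ.starProjection = 0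
    · have h1 : T ∘L Wᗮ.starProjection = 0 := by
        have := aux_mono T V W hVW
        rw [h0, norm_zero] at this
        exact norm_le_zero_iff.1 this
      rw [h0, h1, sub_zero]
      simp
    have hfr := hV2.resolve_right h0
    have hdim := Submodule.finrank_add_inf_finrank_orthogonal hVW
    have hfd : FiniteDimensional ℂ (Vᗮ ⊓ W : Submodule ℂ H) :=
      Submodule.finiteDimensional_of_le inf_le_right
    have hsub : LinearMap.range ((T ∘L Vᗮ.starProjection - T ∘L Wᗮ.starProjection :
      H →L[ℂ] H) : H →ₗ[ℂ] H) ≤ (Vᗮ ⊓ W).map (T : H →ₗ[ℂ] H) := by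
      rintro _ ⟨x, rfl⟩
      exact ⟨_, hmem x, by simp⟩
    refine (Submodule.rank_mono hsub).trans ((rank_map_le _ _).trans ?_)
    rw [← Module.finrank_eq_rank]
    exact_mod_cast (by omega)

theorem stmt0 {H : Type*} [NormedAddCommGroup H] [InnerProductSpace ℂ H] [CompleteSpace H]
    (r : ℝ) (hr : 1 ≤ r) (T : H →L[ℂ] H)
    (hT : Summable fun n => approxNumber T n ^ r) :
    ∃ (α : ℕ → ℝ) (u : ℕ → H →L[ℂ] H),
      (∀ k, ‖u k‖ ≤ 1) ∧
      (∀ k, Module.rank ℂ (LinearMap.range ((u k) : H →ₗ[ℂ] H)) ≤ ((2 ^ k : ℕ) : Cardinal)) ∧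
      HasSum (fun k => α k • u k) T ∧
      Summable (fun k => (2 : ℝ) ^ k * |α k| ^ r) ∧
      ∑' k, (2 : ℝ) ^ k * |α k| ^ r ≤ 2 * ∑' n, approxNumber T n ^ r := by
  have hr0 : 0 < r := by linarith
  have hnn := aux_nonneg T
  have ha0 : Filter.Tendsto (approxNumber T) Filter.atTop (nhds 0) := by
    have h1 := hT.tendsto_atTop_zero.rpow_const (p := r⁻¹) (Or.inr (by positivity))
    rw [Real.zero_rpow (by positivity)] at h1
    refine h1.congr fun n => ?_
    rw [← Real.rpow_mul (hnn n), mul_inv_cancel₀ hr0.ne', Real.rpow_one]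
  have hcpt := aux_compact T ha0
  obtain ⟨V, hVm, hV⟩ := aux_seq T hcpt
  set α : ℕ → ℝ := fun k => approxNumber T (2 ^ k - 1) with hα
  have hαnn : ∀ k, 0 ≤ α k := fun k => hnn _
  set R : ℕ → H →L[ℂ] H := fun k => T ∘L (V (2 ^ k - 1))ᗮ.starProjection with hR
  have hRn : ∀ k, ‖R k‖ ≤ α k := fun k => aux_good_le T hcpt _ _ (hV _)
  have hidx : ∀ k : ℕ, 2 ^ (k + 1) - 1 = (2 ^ k - 1) + 2 ^ k := by
    intro k
    have := Nat.one_le_two_pow (n := k)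
    rw [pow_succ]; omega
  have hblock : ∀ k, ‖R k - R (k + 1)‖ ≤ ‖R k‖ ∧
      Module.rank ℂ (LinearMap.range ((R k - R (k + 1) : H →L[ℂ] H) : H →ₗ[ℂ] H))
        ≤ ((2 ^ k : ℕ) : Cardinal) := by
    intro k
    have h1 := hV (2 ^ (k + 1) - 1)
    rw [hidx] at h1
    have h2 := aux_block T (2 ^ k - 1) (2 ^ k) (V (2 ^ k - 1)) (V ((2 ^ k - 1) + 2 ^ k))
      (hVm (Nat.le_add_right _ _)) (hV _) h1
    have h3 : R (k + 1) = T ∘L (V ((2 ^ k - 1) + 2 ^ k))ᗮ.starProjection := by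
      simp only [hR, hidx]
    rw [h3]
    exact h2
  have hwn : ∀ k, ‖R k - R (k + 1)‖ ≤ α k := fun k => (hblock k).1.trans (hRn k)
  have hsm : ∀ k, α k • ((α k)⁻¹ • (R k - R (k + 1))) = R k - R (k + 1) := by
    intro k
    by_cases h : α k = 0
    · have h1 : R k - R (k + 1) = 0 := norm_le_zero_iff.1 (h ▸ hwn k)
      rw [h1]; simp
    · rw [smul_smul, mul_inv_cancel₀ h, one_smul]
  have hbound := aux_dyadic (fun n => approxNumber T n ^ r)
    (fun m n hmn => Real.rpow_le_rpow (hnn n) (aux_anti T hmn) hr0.le)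
    (fun n => Real.rpow_nonneg (hnn n) r) hT
  have hterm : ∀ k, 0 ≤ (2 : ℝ) ^ k * α k ^ r := fun k =>
    mul_nonneg (by positivity) (Real.rpow_nonneg (hαnn k) r)
  have hsum : Summable fun k => (2 : ℝ) ^ k * α k ^ r :=
    summable_of_sum_range_le hterm hbound
  have habs : (fun k => (2 : ℝ) ^ k * |α k| ^ r) = fun k => (2 : ℝ) ^ k * α k ^ r := by
    funext k; rw [abs_of_nonneg (hαnn k)]
  refine ⟨α, fun k => (α k)⁻¹ • (R k - R (k + 1)), ?_, ?_, ?_, ?_, ?_⟩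
  · intro k
    rw [norm_smul, norm_inv, Real.norm_of_nonneg (hαnn k)]
    exact inv_mul_le_one_of_le₀ (hwn k) (hαnn k)
  · intro k
    refine le_trans (Submodule.rank_mono ?_) (hblock k).2
    rintro _ ⟨x, rfl⟩
    refine ⟨(α k)⁻¹ • x, ?_⟩
    simp [smul_sub]
  · simp only [hsm]
    have hαs : Summable α := by
      set C := ∑' k, (2 : ℝ) ^ k * α k ^ r with hC
      have hle : ∀ k, α k ≤ C ^ r⁻¹ * ((2 : ℝ)⁻¹ ^ r⁻¹) ^ k := by
        intro k
        have h1 : (2 : ℝ) ^ k * α k ^ r ≤ C := hsum.le_tsum k (fun j _ => hterm j)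
        have h2 : α k ^ r ≤ C * (2 : ℝ)⁻¹ ^ k := by
          rw [inv_pow, ← div_eq_mul_inv, le_div_iff₀ (by positivity)]
          linarith
        have hCnn : 0 ≤ C := tsum_nonneg hterm
        have h3 := Real.rpow_le_rpow (Real.rpow_nonneg (hαnn k) r) h2
          (by positivity : 0 ≤ r⁻¹)
        rw [← Real.rpow_mul (hαnn k), mul_inv_cancel₀ hr0.ne', Real.rpow_one,
          Real.mul_rpow hCnn (by positivity)] at h3
        refine h3.trans_eq ?_
        congr 1
        rw [← Real.rpow_natCast, ← Real.rpow_natCast, ← Real.rpow_mul (by norm_num),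
          ← Real.rpow_mul (by norm_num), mul_comm]
      refine Summable.of_nonneg_of_le hαnn hle (Summable.mul_left _ ?_)
      exact summable_geometric_of_lt_one (by positivity)
        (Real.rpow_lt_one (by norm_num) (by norm_num) (by positivity))
    have hns : Summable fun k => ‖R k - R (k + 1)‖ :=
      Summable.of_nonneg_of_le (fun _ => norm_nonneg _) hwn hαs
    have hS : Summable fun k => R k - R (k + 1) := hns.of_norm
    rw [hS.hasSum_iff_tendsto_nat]
    have hR0 : R 0 = T := by
      have h1 : V (2 ^ 0 - 1) = ⊥ := by
        obtain ⟨h, h2, -⟩ := hV (2 ^ 0 - 1)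
        exact Submodule.finrank_eq_zero.1 (by simpa using h2)
      ext x
      simp only [hR, h1, ContinuousLinearMap.comp_apply]
      rw [Submodule.starProjection_eq_self_iff.2 (by simp)]
    have hRt : Filter.Tendsto R Filter.atTop (nhds 0) :=
      squeeze_zero_norm hRn hαs.tendsto_atTop_zero
    simp only [Finset.sum_range_sub']
    rw [hR0]
    simpa using hRt.const_sub T
  · rw [habs]; exact hsum
  · rw [habs]
    exact Real.tsum_le_of_sum_range_le hterm hbound
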